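/- Let n ≥ 2 and b ∈ ℝ. Consider the curve-germ in ℝ^{2n} (coordinates (p₁,q₁,p₂,q₂,…,pₙ,qₙ), all unlisted coordinates equal to 0) f(t) = (t⁴, (1/3)t⁹ + (b/2)t¹⁰, t³, 0, …, 0) (the class E₆³ of the planar singularity E₆). Then Lt(f) = 10. -/

import Mathlib

noncomputable section

/-- The order of vanishing at `0` of a function `h : ℝ → ℝ`: the least `k ≥ 1` such that
the `k`-th derivative of `h` at `0` is nonzero, and `∞` if all derivatives vanish at `0`. -/
def vanishOrder (h : ℝ → ℝ) : ℕ∞ :=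
  sInf {k : ℕ∞ | ∃ m : ℕ, k = m ∧ 1 ≤ m ∧ iteratedDeriv m h 0 ≠ 0}

/-- The standard symplectic form `ω = ∑ dpᵢ ∧ dqᵢ` on `ℝ^{2n}`, where the coordinates are
ordered as `(p₁, q₁, …, pₙ, qₙ)` (so `pᵢ` has index `2(i-1)` and `qᵢ` has index `2(i-1)+1`). -/
def stdSymp (n : ℕ) (u v : Fin (2 * n) → ℝ) : ℝ :=
  ∑ i : Fin n,
    (u ⟨2 * i.val, by have := i.isLt; omega⟩ * v ⟨2 * i.val + 1, by have := i.isLt; omega⟩ -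
     u ⟨2 * i.val + 1, by have := i.isLt; omega⟩ * v ⟨2 * i.val, by have := i.isLt; omega⟩)

/-- A germ at `0` of a smooth Lagrangian submanifold of `(ℝ^{2n}, ω)`, given by `n` smooth
functions `H₁, …, Hₙ` vanishing at `0`, whose differentials are linearly independent at the
points of `{H₁ = ⋯ = Hₙ = 0}` near `0`, and such that `ω` vanishes on `ker DH(x)` at every
such point. -/
structure LagrangianGerm (n : ℕ) : Type where
  H : Fin n → (Fin (2 * n) → ℝ) → ℝ
  smooth : ∀ i, ContDiff ℝ (⊤ : ℕ∞) (H i)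
  zero_at_zero : ∀ i, H i 0 = 0
  lagrangian : ∃ U : Set (Fin (2 * n) → ℝ), IsOpen U ∧ 0 ∈ U ∧
    ∀ x ∈ U, (∀ i, H i x = 0) →
      LinearIndependent ℝ (fun i => fderiv ℝ (H i) x) ∧
      ∀ u v : Fin (2 * n) → ℝ, (∀ i, fderiv ℝ (H i) x u = 0) →
        (∀ i, fderiv ℝ (H i) x v = 0) → stdSymp n u v = 0

/-- The tangency order `t(f, L)` of a curve `f` to a Lagrangian submanifold-germ `L`:
the minimum over `i` of the order of vanishing at `0` of `Hᵢ ∘ f`. -/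
def tOrd {n : ℕ} (f : ℝ → Fin (2 * n) → ℝ) (L : LagrangianGerm n) : ℕ∞ :=
  ⨅ i : Fin n, vanishOrder (fun t => L.H i (f t))

/-- The Lagrangian tangency order `Lt(f)` of a curve `f`. -/
def Lt1 {n : ℕ} (f : ℝ → Fin (2 * n) → ℝ) : ℕ∞ :=
  ⨆ L : LagrangianGerm n, tOrd f L

/-- The Lagrangian tangency order `Lt(f, g)` of a multi-germ of two curves. -/
def Lt2 {n : ℕ} (f g : ℝ → Fin (2 * n) → ℝ) : ℕ∞ :=
  ⨆ L : LagrangianGerm n, min (tOrd f L) (tOrd g L)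

/-- The Lagrangian tangency order `Lt(f, g, h)` of a multi-germ of three curves. -/
def Lt3 {n : ℕ} (f g h : ℝ → Fin (2 * n) → ℝ) : ℕ∞ :=
  ⨆ L : LagrangianGerm n, min (tOrd f L) (min (tOrd g L) (tOrd h L))

open Asymptotics Filter Topology

theorem aux_mv (g g' : ℝ → ℝ) (hg : ∀ s, HasDerivAt g (g' s) s) (h0 : g 0 = 0) (x K : ℝ)
    (hK : ∀ s, |s| ≤ |x| → |g' s| ≤ K) : |g x| ≤ K * |x| := by
  have := Convex.norm_image_sub_le_of_norm_hasDerivWithin_le (f := g) (f' := g') (C := K)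
    (s := Metric.closedBall 0 |x|) (x := 0) (y := x) (fun s _ => (hg s).hasDerivWithinAt)
    (fun s hs => hK s (by simpa using hs)) (convex_closedBall _ _) (by simp) (by simp)
  simpa [h0] using this

theorem aux_taylor (g : ℝ → ℝ) (hg : ContDiff ℝ (⊤ : ℕ∞) g) (m : ℕ) :
    (fun y => g y - ∑ k ∈ Finset.range (m+1), (((k.factorial : ℝ))⁻¹ * iteratedDeriv k g 0) * y ^ k)
      =o[𝓝 0] fun y : ℝ => y ^ m := by
  have h := taylor_isLittleO_univ (f := g) (x₀ := 0) (n := m) (hg.of_le (by exact_mod_cast le_top))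
  simp only [taylor_within_apply, sub_zero, iteratedDerivWithin_univ, smul_eq_mul] at h
  refine h.congr_left fun y => ?_
  congr 1
  exact Finset.sum_congr rfl fun k _ => by ring

theorem aux_poly (m : ℕ) : ∀ (c : ℕ → ℝ),
    (fun t : ℝ => ∑ k ∈ Finset.range (m+1), c k * t ^ k) =o[𝓝[≠] 0] (fun t : ℝ => t ^ m) →
    ∀ k ≤ m, c k = 0 := by
  induction m with
  | zero =>
    intro c h k hk
    obtain rfl : k = 0 := by omega
    simp only [zero_add, Finset.range_one, Finset.sum_singleton, pow_zero, mul_one] at h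
    rw [isLittleO_one_iff] at h
    exact tendsto_nhds_unique tendsto_const_nhds h
  | succ m ih =>
    intro c h
    have h0 : c 0 = 0 := by
      have h1 : Tendsto (fun t : ℝ => ∑ k ∈ Finset.range (m+1+1), c k * t ^ k) (𝓝[≠] 0) (𝓝 0) := by
        refine h.isBigO.trans_tendsto ?_
        have : Tendsto (fun t : ℝ => t ^ (m+1)) (𝓝 0) (𝓝 (0 ^ (m+1))) :=
          (continuous_pow (m+1)).tendsto 0
        rw [zero_pow (by omega)] at this
        exact this.mono_left nhdsWithin_le_nhds
      have h2 : Tendsto (fun t : ℝ => ∑ k ∈ Finset.range (m+1+1), c k * t ^ k) (𝓝[≠] 0)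
          (𝓝 (∑ k ∈ Finset.range (m+1+1), c k * 0 ^ k)) := by
        have : Continuous (fun t : ℝ => ∑ k ∈ Finset.range (m+1+1), c k * t ^ k) := by fun_prop
        exact (this.tendsto 0).mono_left nhdsWithin_le_nhds
      have := tendsto_nhds_unique h2 h1
      rw [Finset.sum_range_succ'] at this
      simpa using this
    have h3 : ∀ k ≤ m, c (k+1) = 0 := by
      apply ih (fun k => c (k+1))
      have := h.mul_isBigO (isBigO_refl (fun t : ℝ => t⁻¹) (𝓝[≠] 0))
      refine this.congr' ?_ ?_
      · filter_upwards [self_mem_nhdsWithin] with t ht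
        have ht : t ≠ 0 := ht
        rw [Finset.sum_range_succ', h0, zero_mul, add_zero, Finset.sum_mul]
        refine Finset.sum_congr rfl fun k _ => ?_
        field_simp
        try ring
      · filter_upwards [self_mem_nhdsWithin] with t ht
        have ht : t ≠ 0 := ht
        field_simp
        try ring
    intro k hk
    rcases k with _ | k
    · exact h0
    · exact h3 k (by omega)

theorem aux_R (h : ℝ × ℝ → ℝ) (hh : ContDiff ℝ (⊤ : ℕ∞) h) : ∃ c C : ℝ, ∀ᶠ z : ℝ × ℝ in 𝓝 0,
    |h z - h (0, z.2) - z.1 * fderiv ℝ h (0, z.2) (1, 0) - z.1 ^ 2 * c| ≤ C * ‖z‖ * z.1 ^ 2 := by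
  have hdx : ∀ (k : ℝ × ℝ → ℝ), ContDiff ℝ (⊤ : ℕ∞) k →
      ContDiff ℝ (⊤ : ℕ∞) (fun z => fderiv ℝ k z (1, 0)) := fun k hk =>
    (hk.fderiv_right (m := (⊤ : ℕ∞)) (by simp)).clm_apply contDiff_const
  have hD : ∀ (k : ℝ × ℝ → ℝ), ContDiff ℝ (⊤ : ℕ∞) k → ∀ y s : ℝ,
      HasDerivAt (fun s => k (s, y)) (fderiv ℝ k (s, y) (1, 0)) s := by
    intro k hk y s
    have h1 : HasFDerivAt k (fderiv ℝ k (s, y)) (s, y) :=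
      ((hk.differentiable (by simp)) _).hasFDerivAt
    have h2 : HasDerivAt (fun s : ℝ => (s, y)) ((1 : ℝ), (0 : ℝ)) s :=
      (hasDerivAt_id s).prodMk (hasDerivAt_const s y)
    exact h1.comp_hasDerivAt s h2
  set hx : ℝ × ℝ → ℝ := fun z => fderiv ℝ h z (1, 0) with hhx
  set hxx : ℝ × ℝ → ℝ := fun z => fderiv ℝ hx z (1, 0) with hhxx
  have shx : ContDiff ℝ (⊤ : ℕ∞) hx := hdx h hh
  have shxx : ContDiff ℝ (⊤ : ℕ∞) hxx := hdx hx shx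
  have hO := ((shxx.differentiable (by simp)) (0 : ℝ × ℝ)).isBigO_sub
  obtain ⟨C, hC⟩ := hO.bound
  obtain ⟨δ, δ0, hδ⟩ := Metric.eventually_nhds_iff.1 hC
  refine ⟨hxx 0 / 2, |C|, ?_⟩
  filter_upwards [Metric.ball_mem_nhds (0 : ℝ × ℝ) δ0] with z hz
  obtain ⟨x, y⟩ := z
  set K := |C| * ‖(x, y)‖ with hK
  have hK2 : ∀ s, |s| ≤ |x| → |hxx (s, y) - hxx 0| ≤ K := by
    intro s hs
    have hn : ‖((s, y) : ℝ × ℝ)‖ ≤ ‖(x, y)‖ := by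
      simp only [Prod.norm_def, Real.norm_eq_abs]
      exact max_le_max hs le_rfl
    have := @hδ (s, y) (by
      rw [dist_zero_right]; rw [Metric.mem_ball, dist_zero_right] at hz; exact lt_of_le_of_lt hn hz)
    rw [sub_zero, Real.norm_eq_abs] at this
    refine this.trans ?_
    rw [hK]
    exact mul_le_mul (le_abs_self C) hn (norm_nonneg _) (abs_nonneg C)
  have h1 : ∀ s, |s| ≤ |x| → |hx (s, y) - hx (0, y) - s * hxx 0| ≤ K * |x| := by
    intro s hs
    have := aux_mv (fun s => hx (s, y) - hx (0, y) - s * hxx 0) (fun s => hxx (s, y) - hxx 0)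
      (fun r => by
        have := ((hD hx shx y r).sub_const (hx (0, y))).sub
          ((hasDerivAt_id r).mul_const (hxx 0))
        refine HasDerivAt.congr_deriv (this.congr_of_eventuallyEq ?_) ?_
        · exact Eventually.of_forall fun s => by simp
        · simp [hhxx]) (by simp) s K
      (fun r hr => hK2 r (hr.trans hs))
    refine this.trans ?_
    exact mul_le_mul_of_nonneg_left hs (by positivity)
  have h2 := aux_mv (fun s => h (s, y) - h (0, y) - s * hx (0, y) - s ^ 2 * (hxx 0 / 2))
      (fun s => hx (s, y) - hx (0, y) - s * hxx 0)
      (fun s => by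
        have := (((hD h hh y s).sub_const (h (0, y))).sub
          ((hasDerivAt_id s).mul_const (hx (0, y)))).sub
          (((hasDerivAt_id s).pow 2).mul_const (hxx 0 / 2))
        refine HasDerivAt.congr_deriv (this.congr_of_eventuallyEq ?_) ?_
        · exact Eventually.of_forall fun s => by simp
        · simp [hhx]; ring) (by simp) x (K * |x|) h1
  calc _ ≤ _ := h2
    _ = _ := by rw [mul_assoc, ← sq, sq_abs]

theorem aux_A (h : ℝ × ℝ → ℝ) (hh : ContDiff ℝ (⊤ : ℕ∞) h) (h0 : h 0 = 0)
    (hF : ∀ m, 1 ≤ m → m ≤ 10 → iteratedDeriv m (fun t : ℝ => h (t ^ 4, t ^ 3)) 0 = 0) :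
    (fun y : ℝ => h (0, y)) =o[𝓝 0] (fun y : ℝ => y ^ 3) ∧
    (deriv (fun y : ℝ => h (0, y))) =o[𝓝 0] (fun y : ℝ => y ^ 2) ∧
    (fun y : ℝ => fderiv ℝ h (0, y) (1, 0)) =o[𝓝 0] (fun y : ℝ => y ^ 2) := by
  set a : ℝ → ℝ := fun y : ℝ => h (0, y) with ha
  set b : ℝ → ℝ := fun y : ℝ => fderiv ℝ h (0, y) (1, 0) with hb
  have sa : ContDiff ℝ (⊤ : ℕ∞) a := hh.comp (contDiff_const.prodMk contDiff_id)
  have sb : ContDiff ℝ (⊤ : ℕ∞) b :=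
    ((hh.fderiv_right (m := (⊤ : ℕ∞)) (by simp)).clm_apply contDiff_const).comp
      (contDiff_const.prodMk contDiff_id)
  have sF : ContDiff ℝ (⊤ : ℕ∞) (fun t : ℝ => h (t ^ 4, t ^ 3)) :=
    hh.comp ((contDiff_id.pow 4).prodMk (contDiff_id.pow 3))
  have tF := aux_taylor _ sF 10
  have hz : ∀ y : ℝ, ∑ k ∈ Finset.range (10+1), (((k.factorial : ℝ))⁻¹ *
      iteratedDeriv k (fun t : ℝ => h (t ^ 4, t ^ 3)) 0) * y ^ k = 0 := by
    intro y
    apply Finset.sum_eq_zero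
    intro k hk
    rw [Finset.mem_range] at hk
    rcases Nat.eq_zero_or_pos k with rfl | hk'
    · have : h (0, 0) = 0 := h0
      simp [this]
    · rw [hF k hk' (by omega)]; simp
  simp only [hz, sub_zero] at tF
  have ta := aux_taylor a sa 4
  have tb := aux_taylor b sb 2
  have t3 : Tendsto (fun t : ℝ => t ^ 3) (𝓝 0) (𝓝 0) := by
    simpa using (continuous_pow 3).tendsto (0 : ℝ)
  have ta' := ta.comp_tendsto t3
  have tb' := (isBigO_refl (fun t : ℝ => t ^ 4) (𝓝 0)).mul_isLittleO (tb.comp_tendsto t3)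
  simp only [Function.comp_def] at ta' tb'
  obtain ⟨c, C, hR⟩ := aux_R h hh
  have tz : Tendsto (fun t : ℝ => (t ^ 4, t ^ 3)) (𝓝 0) (𝓝 (0 : ℝ × ℝ)) := by
    have : Continuous (fun t : ℝ => (t ^ 4, t ^ 3)) := by fun_prop
    have := this.tendsto 0
    simp only [ne_eq, OfNat.ofNat_ne_zero, not_false_eq_true, zero_pow] at this
    exact this
  have hR' := tz.eventually hR
  have tR : (fun t : ℝ => h (t ^ 4, t ^ 3) - a (t ^ 3) - t ^ 4 * b (t ^ 3) - (t ^ 4) ^ 2 * c)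
      =O[𝓝 0] (fun t : ℝ => t ^ 11) := by
    refine IsBigO.of_bound |C| ?_
    filter_upwards [hR', Metric.ball_mem_nhds (0 : ℝ) one_pos] with t ht ht1
    have ht1 : |t| ≤ 1 := by
      rw [Metric.mem_ball, dist_zero_right] at ht1; exact ht1.le
    rw [Real.norm_eq_abs]
    refine ht.trans ?_
    have hn : ‖((t ^ 4, t ^ 3) : ℝ × ℝ)‖ ≤ |t| ^ 3 := by
      simp only [Prod.norm_def, Real.norm_eq_abs, abs_pow]
      exact max_le (pow_le_pow_of_le_one (abs_nonneg t) ht1 (by norm_num)) le_rfl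
    have e : ‖t ^ 11‖ = |t| ^ 3 * (t ^ 4) ^ 2 := by
      rw [Real.norm_eq_abs, abs_pow, show (t ^ 4) ^ 2 = t ^ 8 by ring,
        ← Even.pow_abs (by decide : Even 8) t]; ring
    rw [e, ← mul_assoc]
    refine mul_le_mul_of_nonneg_right ?_ (by positivity)
    exact mul_le_mul (le_abs_self C) hn (norm_nonneg _) (abs_nonneg C)
  have p11 : ∀ m, 10 < m → (fun t : ℝ => t ^ m) =o[𝓝 0] (fun t : ℝ => t ^ 10) := fun m hm =>
    isLittleO_pow_pow hm
  have tR' := tR.trans_isLittleO (p11 11 (by norm_num))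
  have ta'' := ta'.trans_isBigO (k := fun t : ℝ => t ^ 12) (by
    simp only [← pow_mul]; exact isBigO_refl _ _) |>.trans (p11 12 (by norm_num))
  have tb'' := tb'.trans_isBigO (k := fun t : ℝ => t ^ 10) (by
    simp only [← pow_mul, ← pow_add]; exact isBigO_refl _ _)
  have tot := (((tF.sub tR').sub ta'').sub tb'').sub
    ((p11 12 (by norm_num)).const_mul_left (((Nat.factorial 4 : ℝ))⁻¹ * iteratedDeriv 4 a 0))
  let cf : ℕ → ℝ := fun k =>
    if k = 0 then iteratedDeriv 0 a 0 else if k = 3 then iteratedDeriv 1 a 0 else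
    if k = 6 then (2:ℝ)⁻¹ * iteratedDeriv 2 a 0 else if k = 9 then (6:ℝ)⁻¹ * iteratedDeriv 3 a 0 else
    if k = 4 then iteratedDeriv 0 b 0 else if k = 7 then iteratedDeriv 1 b 0 else
    if k = 10 then (2:ℝ)⁻¹ * iteratedDeriv 2 b 0 else if k = 8 then c else 0
  have key := aux_poly 10 cf (by
    refine (tot.mono nhdsWithin_le_nhds).congr_left ?_
    intro t
    simp [Finset.sum_range_succ, cf, Nat.factorial]
    ring)
  have za : ∀ k < 4, iteratedDeriv k a 0 = 0 := by
    intro k hk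
    have h0 := key 0 (by norm_num)
    have h3 := key 3 (by norm_num)
    have h6 := key 6 (by norm_num)
    have h9 := key 9 (by norm_num)
    simp [cf] at h0 h3 h6 h9
    interval_cases k <;> simp_all
  have zb : ∀ k < 3, iteratedDeriv k b 0 = 0 := by
    intro k hk
    have h0 := key 4 (by norm_num)
    have h3 := key 7 (by norm_num)
    have h6 := key 10 (by norm_num)
    simp [cf] at h0 h3 h6
    interval_cases k <;> simp_all
  refine ⟨?_, ?_, ?_⟩
  · refine (aux_taylor a sa 3).congr_left fun y => ?_
    rw [Finset.sum_eq_zero, sub_zero]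
    intro k hk
    rw [za k (by simpa using hk)]; simp
  · have sa' : ContDiff ℝ (⊤ : ℕ∞) (deriv a) := by
      exact (contDiff_infty_iff_deriv.1 sa).2
    refine (aux_taylor (deriv a) sa' 2).congr_left fun y => ?_
    rw [Finset.sum_eq_zero, sub_zero]
    intro k hk
    rw [← iteratedDeriv_succ', za (k+1) (by have := Finset.mem_range.1 hk; omega)]; simp
  · refine (aux_taylor b sb 2).congr_left fun y => ?_
    rw [Finset.sum_eq_zero, sub_zero]
    intro k hk
    rw [zb k (by simpa using hk)]; simp

theorem aux_surj {n : ℕ} {E : Type*} [NormedAddCommGroup E] [NormedSpace ℝ E]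
    (φ : Fin n → E →L[ℝ] ℝ) (h : LinearIndependent ℝ φ) :
    (ContinuousLinearMap.pi φ).range = ⊤ := by
  by_contra hne
  obtain ⟨g, hg0, hg⟩ := Submodule.exists_le_ker_of_lt_top _ (lt_top_iff_ne_top.2 hne)
  apply hg0
  rw [Fintype.linearIndependent_iff] at h
  have hz := h (fun i => g (Pi.single i 1)) (by
    ext x
    have hx : g ((ContinuousLinearMap.pi φ) x) = 0 := by
      have : (ContinuousLinearMap.pi φ) x ∈ LinearMap.ker g := hg ⟨x, rfl⟩
      simpa using this
    rw [LinearMap.pi_apply_eq_sum_univ g] at hx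
    simp only [_root_.sum_apply, _root_.smul_apply, smul_eq_mul,
      _root_.zero_apply]
    rw [← hx]
    refine Finset.sum_congr rfl fun i _ => ?_
    have e : (fun j => if i = j then (1:ℝ) else 0) = Pi.single i 1 := by
      ext j; simp [Pi.single_apply, eq_comm]
    rw [e, ContinuousLinearMap.pi_apply, smul_eq_mul, mul_comm])
  refine LinearMap.pi_ext' fun i => ?_
  ext
  simpa using hz i

theorem aux_B {E F : Type*} [NormedAddCommGroup E] [NormedSpace ℝ E] [CompleteSpace E]
    [NormedAddCommGroup F] [NormedSpace ℝ F] [CompleteSpace F]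
    (G : E → F) (hG : ContDiff ℝ (⊤ : ℕ∞) G) (hs : (fderiv ℝ G 0).range = ⊤)
    (U : Set E) (hU : U ∈ 𝓝 (0 : E)) (c u v : ℝ → E) (B : ℝ) (hB : 0 ≤ B)
    (hc : Tendsto c (𝓝 0) (𝓝 0))
    (hu : ∀ᶠ y in 𝓝 0, ‖u y‖ ≤ B) (hv : ∀ᶠ y in 𝓝 0, ‖v y‖ ≤ B)
    (h1 : (fun y => G (c y)) =o[𝓝 0] (fun y : ℝ => y ^ 2))
    (h2 : (fun y => fderiv ℝ G (c y) (u y)) =o[𝓝 0] (fun y : ℝ => y ^ 2))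
    (h3 : (fun y => fderiv ℝ G (c y) (v y)) =o[𝓝 0] (fun y : ℝ => y ^ 2))
    (η : ℝ) (hη : 0 < η) :
    ∀ᶠ y : ℝ in 𝓝 0, ∃ x u' v', x ∈ U ∧ G x = 0 ∧ fderiv ℝ G x u' = 0 ∧ fderiv ℝ G x v' = 0 ∧
      ‖u' - u y‖ ≤ η * y ^ 2 ∧ ‖v' - v y‖ ≤ η * y ^ 2 := by
  set A := fderiv ℝ G 0 with hA
  let N := A.nonlinearRightInverseOfSurjective hs
  have hN : 0 < N.nnnorm := A.nonlinearRightInverseOfSurjective_nnnorm_pos hs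
  set κ : NNReal := N.nnnorm with hκ
  have hκ' : (0:ℝ) < κ := hN
  have hstrict : HasStrictFDerivAt G A 0 := hG.contDiffAt.hasStrictFDerivAt (by simp)
  obtain ⟨s, hs0, hsA⟩ := hstrict.approximates_deriv_on_nhds (c := κ⁻¹ / 2)
    (Or.inr (by positivity))
  have sD : ContDiff ℝ (⊤ : ℕ∞) (fderiv ℝ G) := hG.fderiv_right (by simp)
  obtain ⟨K, sL, hsL, hL⟩ :=
    (sD.contDiffAt (x := 0)).of_le (show (1 : WithTop ℕ∞) ≤ _ by exact_mod_cast le_top)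
      |>.exists_lipschitzOnWith
  have hcont : ∀ᶠ x in 𝓝 (0 : E), ‖fderiv ℝ G x - A‖ < κ⁻¹ / 2 := by
    have : Tendsto (fun x => ‖fderiv ℝ G x - A‖) (𝓝 0) (𝓝 ‖fderiv ℝ G 0 - A‖) :=
      (sD.continuous.sub (continuous_const (y := A))).norm.tendsto 0
    rw [← hA, sub_self, norm_zero] at this
    exact this.eventually (gt_mem_nhds (by positivity))
  obtain ⟨r, r0, hr⟩ := Metric.nhds_basis_closedBall.mem_iff.1
    (Filter.inter_mem (Filter.inter_mem hs0 hU) (Filter.inter_mem hsL hcont))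
  set D : ℝ := 2 * κ * (1 + 2 * κ * K * B) with hD
  have hD0 : 0 < D := by positivity
  set η1 := η / D with hη1
  have hη10 : 0 < η1 := by positivity
  have e1 := h1.def hη10
  have e2 := h2.def hη10
  have e3 := h3.def hη10
  have ec : ∀ᶠ y in 𝓝 (0:ℝ), ‖c y‖ < r / 2 := by
    have := hc.norm
    rw [norm_zero] at this
    exact this.eventually (gt_mem_nhds (by positivity))
  have ey : ∀ᶠ y in 𝓝 (0:ℝ), 2 * κ * (η1 * y ^ 2) < r / 2 := by
    have : Continuous (fun y : ℝ => 2 * κ * (η1 * y ^ 2)) := by fun_prop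
    have := this.tendsto 0
    simp only [ne_eq, OfNat.ofNat_ne_zero, not_false_eq_true, zero_pow, mul_zero] at this
    exact this.eventually (gt_mem_nhds (by positivity))
  filter_upwards [e1, e2, e3, ec, ey, hu, hv] with y e1 e2 e3 ec ey hu hv
  have ny : ‖y ^ 2‖ = y ^ 2 := by rw [Real.norm_eq_abs, abs_of_nonneg (sq_nonneg y)]
  rw [ny] at e1 e2 e3
  have hball : Metric.closedBall (c y) (2 * κ * (η1 * y ^ 2)) ⊆ Metric.closedBall 0 r := by
    intro x hx
    rw [mem_closedBall_iff_norm] at hx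
    rw [mem_closedBall_zero_iff]
    calc ‖x‖ = ‖(x - c y) + c y‖ := by simp
      _ ≤ ‖x - c y‖ + ‖c y‖ := norm_add_le _ _
      _ ≤ r := by linarith
  obtain ⟨x, hx, hx0⟩ := hsA.surjOn_closedBall_of_nonlinearRightInverse N
    (ε := 2 * κ * (η1 * y ^ 2)) (b := c y) (by positivity)
    (hball.trans (hr.trans (fun z hz => hz.1.1)))
    (show (0 : F) ∈ _ by
      rw [mem_closedBall_iff_norm, zero_sub, norm_neg]
      refine e1.trans (le_of_eq ?_)
      push_cast
      rw [← hκ]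
      field_simp
      ring)
  have hxr := hr (hball hx)
  have hcr := hr (hball (Metric.mem_closedBall_self (x := c y) (by positivity)))
  have hlip : ‖fderiv ℝ G x - fderiv ℝ G (c y)‖ ≤ K * (2 * κ * (η1 * y ^ 2)) := by
    have := hL.dist_le_mul x hxr.2.1 (c y) hcr.2.1
    rw [dist_eq_norm] at this
    exact this.trans (mul_le_mul_of_nonneg_left hx K.2)
  have happ : ApproximatesLinearOn (fderiv ℝ G x) A Set.univ (κ⁻¹ / 2) := by
    intro p _ q _
    have hx2 : ‖fderiv ℝ G x - A‖ < κ⁻¹ / 2 := hxr.2.2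
    rw [← map_sub, ← _root_.sub_apply]
    refine (ContinuousLinearMap.le_opNorm _ _).trans ?_
    refine mul_le_mul_of_nonneg_right ?_ (norm_nonneg _)
    push_cast
    exact hx2.le
  have corr : ∀ w : E, ‖w‖ ≤ B → ‖fderiv ℝ G (c y) w‖ ≤ η1 * y ^ 2 →
      ∃ w', fderiv ℝ G x w' = 0 ∧ ‖w' - w‖ ≤ η * y ^ 2 := by
    intro w hw hw2
    have hb : ‖fderiv ℝ G x w‖ ≤ (1 + 2 * κ * K * B) * (η1 * y ^ 2) := by
      calc ‖fderiv ℝ G x w‖ = ‖(fderiv ℝ G x - fderiv ℝ G (c y)) w + fderiv ℝ G (c y) w‖ := by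
            simp
        _ ≤ ‖(fderiv ℝ G x - fderiv ℝ G (c y)) w‖ + ‖fderiv ℝ G (c y) w‖ := norm_add_le _ _
        _ ≤ ‖fderiv ℝ G x - fderiv ℝ G (c y)‖ * ‖w‖ + η1 * y ^ 2 :=
            add_le_add (ContinuousLinearMap.le_opNorm _ _) hw2
        _ ≤ (K * (2 * κ * (η1 * y ^ 2))) * B + η1 * y ^ 2 := by gcongr
        _ = _ := by ring
    obtain ⟨w', hw', hw0⟩ := happ.surjOn_closedBall_of_nonlinearRightInverse N
      (ε := η * y ^ 2) (b := w) (by positivity) (Set.subset_univ _)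
      (show (0 : F) ∈ _ by
        rw [mem_closedBall_iff_norm, zero_sub, norm_neg]
        refine hb.trans (le_of_eq ?_)
        push_cast
        rw [← hκ, hη1, hD]
        field_simp
        ring)
    exact ⟨w', hw0, by rwa [mem_closedBall_iff_norm] at hw'⟩
  obtain ⟨u', hu1, hu2⟩ := corr (u y) hu e2
  obtain ⟨v', hv1, hv2⟩ := corr (v y) hv e3
  exact ⟨x, u', v', hxr.1.2, hx0, hu1, hv1, hu2, hv2⟩

theorem aux_symp_bound (n : ℕ) (u v : Fin (2 * n) → ℝ) :
    |stdSymp n u v| ≤ 2 * n * (‖u‖ * ‖v‖) := by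
  unfold stdSymp
  refine (Finset.abs_sum_le_sum_abs _ _).trans ?_
  refine (Finset.sum_le_card_nsmul _ _ (2 * (‖u‖ * ‖v‖)) ?_).trans (le_of_eq ?_)
  · intro i _
    refine (abs_sub _ _).trans ?_
    rw [abs_mul, abs_mul, two_mul (‖u‖ * ‖v‖)]
    refine add_le_add ?_ ?_ <;>
    exact mul_le_mul (norm_le_pi_norm u _) (norm_le_pi_norm v _) (abs_nonneg _) (norm_nonneg _)
  · simp; ring

theorem aux_symp_sub (n : ℕ) (u v u' v' : Fin (2 * n) → ℝ) :
    stdSymp n u v = stdSymp n u' v' - stdSymp n (u' - u) v' - stdSymp n u (v' - v) := by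
  unfold stdSymp
  rw [← Finset.sum_sub_distrib, ← Finset.sum_sub_distrib]
  refine Finset.sum_congr rfl fun i _ => ?_
  simp only [Pi.sub_apply]
  ring

theorem aux_upper (n : ℕ) (hn : 2 ≤ n) (b : ℝ) (L : LagrangianGerm n)
    (hL : ∀ i m, 1 ≤ m → m ≤ 10 → iteratedDeriv m (fun t : ℝ => L.H i
      (fun (j : Fin (2 * n)) => if (j : ℕ) = 0 then t ^ 4 else if (j : ℕ) = 1 then (1 / 3) * t ^ 9 + (b / 2) * t ^ 10 else if (j : ℕ) = 2 then t ^ 3 else (0 : ℝ))) 0 = 0) : False := by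
  let M : ℝ × ℝ → Fin (2 * n) → ℝ := fun z j => if (j : ℕ) = 0 then z.1 else
    if (j : ℕ) = 1 then (1/3) * z.2 ^ 3 + (b / 2) * z.1 * z.2 ^ 2 else
    if (j : ℕ) = 2 then z.2 else 0
  let u : ℝ → Fin (2 * n) → ℝ := fun y j => if (j : ℕ) = 0 then 1 else
    if (j : ℕ) = 1 then (b / 2) * y ^ 2 else 0
  let v : ℝ → Fin (2 * n) → ℝ := fun y j => if (j : ℕ) = 0 then 0 else
    if (j : ℕ) = 1 then y ^ 2 else if (j : ℕ) = 2 then 1 else 0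
  have sM : ContDiff ℝ (⊤ : ℕ∞) M := by
    rw [contDiff_pi]
    intro j
    simp only [M]
    split_ifs <;> fun_prop
  have M0 : M 0 = 0 := by
    ext j; simp [M]
  have hMu : ∀ y, HasDerivAt (fun s => M (s, y)) (u y) 0 := by
    intro y
    rw [hasDerivAt_pi]
    intro j
    simp only [M, u]
    split_ifs
    · exact hasDerivAt_id _
    · have := (((hasDerivAt_id (0:ℝ)).const_mul (b/2)).mul_const (y^2)).const_add ((1/3) * y ^ 3)
      simpa using this
    · exact hasDerivAt_const _ _
    · exact hasDerivAt_const _ _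
  have hMv : ∀ y, HasDerivAt (fun s => M (0, s)) (v y) y := by
    intro y
    rw [hasDerivAt_pi]
    intro j
    simp only [M, v]
    split_ifs
    · exact hasDerivAt_const _ _
    · have := ((hasDerivAt_pow 3 y).const_mul (1/3))
      simp only [mul_zero, zero_mul, add_zero]
      refine this.congr_deriv ?_
      norm_num
      ring
    · exact hasDerivAt_id _
    · exact hasDerivAt_const _ _
  have hA := fun i => aux_A (fun z => L.H i (M z)) ((L.smooth i).comp sM)
    (by simp only [M0]; exact L.zero_at_zero i) (by
      intro m h1 h2
      refine Eq.trans ?_ (hL i m h1 h2)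
      congr 1
      ext t
      congr 1
      ext j
      simp only [M]
      split_ifs <;> ring)
  have hd : ∀ i x, HasFDerivAt (L.H i) (fderiv ℝ (L.H i) x) x := fun i x =>
    ((L.smooth i).differentiable (by simp) x).hasFDerivAt
  have hAv : ∀ i y, deriv (fun y => L.H i (M (0, y))) y = fderiv ℝ (L.H i) (M (0, y)) (v y) :=
    fun i y => ((hd i (M (0, y))).comp_hasDerivAt y (hMv y)).deriv
  have hAu : ∀ i y, fderiv ℝ (fun z => L.H i (M z)) (0, y) (1, 0) =
      fderiv ℝ (L.H i) (M (0, y)) (u y) := by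
    intro i y
    have e1 := ((hd i (M (0, y))).comp_hasDerivAt (0:ℝ) (f := fun s => M (s, y)) (hMu y))
    have h1 : HasFDerivAt (fun z => L.H i (M z)) (fderiv ℝ (fun z => L.H i (M z)) (0, y)) (0, y) :=
      ((((L.smooth i).comp sM).differentiable (by simp)) _).hasFDerivAt
    have h2 : HasDerivAt (fun s : ℝ => (s, y)) ((1 : ℝ), (0 : ℝ)) 0 :=
      (hasDerivAt_id (0:ℝ)).prodMk (hasDerivAt_const 0 y)
    have e2 := h1.comp_hasDerivAt (0:ℝ) (f := fun s : ℝ => (s, y)) h2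
    exact e2.unique e1
  let G : (Fin (2 * n) → ℝ) → Fin n → ℝ := fun x i => L.H i x
  have sG : ContDiff ℝ (⊤ : ℕ∞) G := contDiff_pi.2 L.smooth
  have dG : ∀ x, fderiv ℝ G x = ContinuousLinearMap.pi (fun i => fderiv ℝ (L.H i) x) := fun x =>
    (hasFDerivAt_pi.2 fun i => hd i x).fderiv
  obtain ⟨U, hUo, hU0, hUL⟩ := L.lagrangian
  have ep : (fun y : ℝ => y ^ 3) =O[𝓝 0] (fun y : ℝ => y ^ 2) :=
    (isLittleO_pow_pow (by norm_num : 2 < 3)).isBigO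
  set B : ℝ := 1 + |b / 2| with hB
  have hB0 : 0 < B := by positivity
  have y1 : ∀ᶠ y : ℝ in 𝓝 0, |y| ^ 2 ≤ 1 := by
    filter_upwards [Metric.ball_mem_nhds (0 : ℝ) one_pos] with t ht1
    have ht1 : |t| ≤ 1 := by
      rw [Metric.mem_ball, dist_zero_right] at ht1; exact ht1.le
    exact pow_le_one₀ (abs_nonneg t) ht1
  have hu : ∀ᶠ y in 𝓝 0, ‖u y‖ ≤ B := by
    filter_upwards [y1] with y hy
    rw [pi_norm_le_iff_of_nonneg hB0.le]
    intro j
    simp only [u, Real.norm_eq_abs]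
    have := abs_nonneg (b / 2)
    split_ifs
    · simp [hB]
    · rw [abs_mul, abs_pow]; nlinarith
    · simpa using hB0.le
  have hv : ∀ᶠ y in 𝓝 0, ‖v y‖ ≤ B := by
    filter_upwards [y1] with y hy
    rw [pi_norm_le_iff_of_nonneg hB0.le]
    intro j
    simp only [v, Real.norm_eq_abs]
    have := abs_nonneg (b / 2)
    split_ifs
    · simpa using hB0.le
    · rw [abs_pow]; linarith
    · simp [hB]
    · simpa using hB0.le
  have hc : Tendsto (fun y => M (0, y)) (𝓝 0) (𝓝 0) := by
    have : Continuous (fun y : ℝ => M (0, y)) :=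
      sM.continuous.comp (continuous_const.prodMk continuous_id)
    have := this.tendsto 0
    have e : M (0, 0) = 0 := M0
    rwa [e] at this
  set η : ℝ := min 1 (1 / (2 * (2 * n * (2 * B + 1)))) with hη
  have n0 : (0:ℝ) < n := by exact_mod_cast (by omega : 0 < n)
  have hη0 : 0 < η := lt_min one_pos (by positivity)
  have key := aux_B G sG
    (by rw [dG]; exact aux_surj _ (hUL 0 hU0 L.zero_at_zero).1) U (hUo.mem_nhds hU0)
    (fun y => M (0, y)) u v B hB0.le hc hu hv
    (isLittleO_pi.2 fun i => (hA i).1.trans_isBigO ep)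
    (by
      rw [isLittleO_pi]; intro i
      refine (hA i).2.2.congr_left fun y => ?_
      rw [dG, hAu]; rfl)
    (by
      rw [isLittleO_pi]; intro i
      refine (hA i).2.1.congr_left fun y => ?_
      rw [dG, hAv]; rfl) η hη0
  have hfin : ∀ᶠ y : ℝ in 𝓝[≠] 0, False := by
    filter_upwards [key.filter_mono nhdsWithin_le_nhds, hu.filter_mono nhdsWithin_le_nhds,
      hv.filter_mono nhdsWithin_le_nhds, y1.filter_mono nhdsWithin_le_nhds,
      self_mem_nhdsWithin] with y ⟨x, u', v', hxU, hx0, hu', hv', nu, nv⟩ hu hv hy hy0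
    have hy0 : y ≠ 0 := hy0
    have hz : stdSymp n u' v' = 0 := by
      refine (hUL x hxU (fun i => congrFun hx0 i)).2 u' v' (fun i => ?_) (fun i => ?_)
      · rw [dG] at hu'; exact congrFun hu' i
      · rw [dG] at hv'; exact congrFun hv' i
    have hw : stdSymp n (u y) (v y) = y ^ 2 := by
      unfold stdSymp
      rw [Finset.sum_eq_single (⟨0, by omega⟩ : Fin n)]
      · simp [u, v]
      · intro i _ hi
        have hi : (i : ℕ) ≠ 0 := fun h => hi (Fin.ext h)
        have h1 : ¬ (2 * (i:ℕ) = 1) := by omega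
        simp [u, v, hi, h1]
      · intro h; exact absurd (Finset.mem_univ _) h
    have hs := aux_symp_sub n (u y) (v y) u' v'
    rw [hz, hw] at hs
    have b1 := aux_symp_bound n (u' - u y) v'
    have b2 := aux_symp_bound n (u y) (v' - v y)
    have yp : 0 < y ^ 2 := by positivity
    have hη1 : η ≤ 1 := min_le_left _ _
    rw [sq_abs] at hy
    have nv' : ‖v'‖ ≤ B + 1 := by
      calc ‖v'‖ = ‖(v' - v y) + v y‖ := by simp
        _ ≤ ‖v' - v y‖ + ‖v y‖ := norm_add_le _ _
        _ ≤ B + 1 := by nlinarith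
    have c1 : ‖u' - u y‖ * ‖v'‖ ≤ (η * y ^ 2) * (B + 1) :=
      mul_le_mul nu nv' (norm_nonneg _) (by positivity)
    have c2 : ‖u y‖ * ‖v' - v y‖ ≤ B * (η * y ^ 2) :=
      mul_le_mul hu nv (norm_nonneg _) (by positivity)
    have d1 := b1.trans (mul_le_mul_of_nonneg_left c1 (by positivity))
    have d2 := b2.trans (mul_le_mul_of_nonneg_left c2 (by positivity))
    have f1 := neg_abs_le (stdSymp n (u' - u y) v')
    have f2 := neg_abs_le (stdSymp n (u y) (v' - v y))
    have tot : y ^ 2 ≤ (η * (2 * n * (2 * B + 1))) * y ^ 2 := by linarith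
    have hη2 : η * (2 * n * (2 * B + 1)) ≤ 1 / 2 := by
      calc η * (2 * n * (2 * B + 1)) ≤ (1 / (2 * (2 * n * (2 * B + 1)))) * (2 * n * (2 * B + 1)) :=
            mul_le_mul_of_nonneg_right (min_le_right _ _) (by positivity)
        _ = 1 / 2 := by field_simp
    nlinarith
  rw [Filter.eventually_false_iff_eq_bot] at hfin
  exact NeBot.ne inferInstance hfin

def auxL (n : ℕ) (hn : 2 ≤ n) : LagrangianGerm n where
  H i x := x ⟨2 * i.val + 1, by have := i.isLt; omega⟩ -
    (if (i : ℕ) = 0 then (1/3) * x ⟨2, by omega⟩ ^ 3 else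
     if (i : ℕ) = 1 then x ⟨0, by omega⟩ * x ⟨2, by omega⟩ ^ 2 else 0)
  smooth i := by split_ifs <;> fun_prop
  zero_at_zero i := by simp
  lagrangian := by
    refine ⟨Set.univ, isOpen_univ, trivial, fun x _ _ => ?_⟩
    have hD : ∀ (i : Fin n) (w : Fin (2 * n) → ℝ), fderiv ℝ (fun x : Fin (2 * n) → ℝ =>
        x ⟨2 * i.val + 1, by have := i.isLt; omega⟩ -
        (if (i : ℕ) = 0 then (1/3) * x ⟨2, by omega⟩ ^ 3 else
        if (i : ℕ) = 1 then x ⟨0, by omega⟩ * x ⟨2, by omega⟩ ^ 2 else 0)) x w =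
        w ⟨2 * i.val + 1, by have := i.isLt; omega⟩ -
        (if (i : ℕ) = 0 then x ⟨2, by omega⟩ ^ 2 * w ⟨2, by omega⟩ else
        if (i : ℕ) = 1 then x ⟨2, by omega⟩ ^ 2 * w ⟨0, by omega⟩ +
          2 * x ⟨0, by omega⟩ * x ⟨2, by omega⟩ * w ⟨2, by omega⟩ else 0) := by
      intro i w
      have hp : ∀ j : Fin (2 * n), HasFDerivAt (fun x : Fin (2 * n) → ℝ => x j)
        (ContinuousLinearMap.proj (R := ℝ) j) x := fun j => hasFDerivAt_apply j x
      split_ifs with h0 h1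
      · erw [((hp _).fun_sub (((hp _).pow 3).const_mul (1/3))).fderiv]
        simp
        ring
      · erw [((hp _).fun_sub ((hp _).fun_mul ((hp _).pow 2))).fderiv]
        simp
        ring
      · rw [((hp _).fun_sub (hasFDerivAt_const _ _)).fderiv]
        simp
    refine ⟨?_, ?_⟩
    · rw [Fintype.linearIndependent_iff]
      intro g hg i
      have := congrArg (fun φ : (Fin (2 * n) → ℝ) →L[ℝ] ℝ =>
        φ (Pi.single ⟨2 * i.val + 1, by have := i.isLt; omega⟩ 1)) hg
      simp only [_root_.sum_apply, _root_.smul_apply, smul_eq_mul,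
        _root_.zero_apply, hD] at this
      rw [Finset.sum_eq_single i] at this
      · have h0 : ¬ (2 = 2 * (i:ℕ) + 1) := by omega
        simpa [Pi.single_apply, h0] using this
      · intro k _ hk
        have h0 : ¬ (2 = 2 * (i:ℕ) + 1) := by omega
        have h1 : ¬ ((k:ℕ) = i) := fun h => hk (Fin.ext h)
        simp [Pi.single_apply, h0, h1]
      · intro h; exact absurd (Finset.mem_univ _) h
    · intro u v hu hv
      simp only [hD] at hu hv
      unfold stdSymp
      have hsub : ∀ i : Fin n, i ∉ ({⟨0, by omega⟩, ⟨1, by omega⟩} : Finset (Fin n)) →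
          u ⟨2 * i.val, by have := i.isLt; omega⟩ * v ⟨2 * i.val + 1, by have := i.isLt; omega⟩ -
          u ⟨2 * i.val + 1, by have := i.isLt; omega⟩ * v ⟨2 * i.val, by have := i.isLt; omega⟩
            = 0 := by
        intro i hi
        simp only [Finset.mem_insert, Finset.mem_singleton, not_or, Fin.ext_iff] at hi
        have h1 := hu i
        have h2 := hv i
        simp only [hi.1, hi.2, if_false, sub_zero] at h1 h2
        rw [h1, h2]; ring
      rw [← Finset.sum_subset (Finset.subset_univ
        ({⟨0, by omega⟩, ⟨1, by omega⟩} : Finset (Fin n))) (fun i _ hi => hsub i hi)]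
      rw [Finset.sum_pair (by simp)]
      have u0 := hu ⟨0, by omega⟩
      have u1 := hu ⟨1, by omega⟩
      have v0 := hv ⟨0, by omega⟩
      have v1 := hv ⟨1, by omega⟩
      simp at u0 u1 v0 v1
      simp
      rw [sub_eq_zero] at u0 u1 v0 v1
      rw [u0, u1, v0, v1]
      ring

/-- The Lagrangian tangency order of the class `E₆³` of the planar singularity `E₆`. -/
theorem E6_3_lagrangian_tangency_order
    (n : ℕ) (hn : 2 ≤ n) (b : ℝ)
    (f : ℝ → Fin (2 * n) → ℝ)
    (hf : f = fun (t : ℝ) (j : Fin (2 * n)) => if (j : ℕ) = 0 then t ^ 4 else if (j : ℕ) = 1 then (1 / 3) * t ^ 9 + (b / 2) * t ^ 10 else if (j : ℕ) = 2 then t ^ 3 else (0 : ℝ)) :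
    Lt1 f = 10 := by
  apply le_antisymm
  · refine iSup_le fun L => ?_
    by_contra hlt
    rw [not_le] at hlt
    refine aux_upper n hn b L fun i m h1 h2 => ?_
    by_contra hne
    have h3 : tOrd f L ≤ vanishOrder (fun t => L.H i (f t)) := iInf_le _ i
    have h4 : vanishOrder (fun t => L.H i (f t)) ≤ (m : ℕ∞) :=
      sInf_le ⟨m, rfl, h1, by rw [hf]; exact hne⟩
    have h5 : (m : ℕ∞) ≤ 10 := by exact_mod_cast h2
    exact absurd (h3.trans (h4.trans h5)) (not_le.2 hlt)
  · refine le_iSup_of_le (auxL n hn) ?_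
    refine le_iInf fun i => ?_
    refine le_sInf ?_
    rintro k ⟨m, rfl, h1, h2⟩
    by_contra hlt
    have hm : m < 10 := by
      by_contra h
      exact hlt (by exact_mod_cast not_lt.1 h)
    apply h2
    have e : (fun t => (auxL n hn).H i (f t)) = fun t : ℝ =>
        (if (i : ℕ) = 0 then b / 2 else if (i : ℕ) = 1 then -1 else 0) * t ^ 10 := by
      ext t
      simp only [auxL, hf]
      by_cases h0 : (i : ℕ) = 0
      · simp [h0]; ring
      · by_cases h1 : (i : ℕ) = 1
        · simp [h1]; ring
        · have : ¬ (2 * (i : ℕ) + 1 = 2) := by omega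
          simp [h0, h1, this]
    rw [e, iteratedDeriv_const_mul_field, iteratedDeriv_fun_pow_zero]
    simp [hm.ne]

end
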